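/- Let G be a finitely generated metabelian group. There is a constant C depending only on G such that for every finite index subgroup H of G containing the derived subgroup G', we have t(H^{ab}) ≤ C^{[G:H]}. -/

import Mathlib

/-- A group is metabelian if its derived subgroup is abelian. -/
def IsMetabelian (G : Type*) [Group G] : Prop :=
  ∀ x ∈ ⁅(⊤ : Subgroup G), (⊤ : Subgroup G)⁆, ∀ y ∈ ⁅(⊤ : Subgroup G), (⊤ : Subgroup G)⁆,
    x * y = y * x

open Finset in
lemma det_le_l1 {ι : Type*} [Fintype ι] [DecidableEq ι] (L : ℕ) (b : Matrix ι ι ℤ)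
    (hb : ∀ i, ∑ j, |b i j| ≤ L) : b.det.natAbs ≤ L ^ Fintype.card ι := by
  zify
  calc |b.det| = |b.transpose.det| := by rw [Matrix.det_transpose]
    _ ≤ ∑ σ : Equiv.Perm ι, ∏ i, |b i (σ i)| := by
        rw [Matrix.det_apply]
        refine (abs_sum_le_sum_abs _ _).trans (le_of_eq ?_)
        refine sum_congr rfl fun σ _ => ?_
        rcases Int.units_eq_one_or (Equiv.Perm.sign σ) with h | h <;>
          simp [h, abs_prod]
    _ ≤ ∑ f : ι → ι, ∏ i, |b i (f i)| := by
        rw [← sum_image (f := fun f : ι → ι => ∏ i, |b i (f i)|) (g := fun σ : Equiv.Perm ι => (σ : ι → ι))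
          (s := univ) (fun a _ b _ h => DFunLike.coe_injective h)]
        exact sum_le_sum_of_subset_of_nonneg (subset_univ _) (fun _ _ _ => prod_nonneg fun _ _ => abs_nonneg _)
    _ = ∏ i, ∑ j, |b i j| := by
        rw [prod_univ_sum]; simp
    _ ≤ ∏ i : ι, (L : ℤ) := prod_le_prod (fun _ _ => sum_nonneg fun _ _ => abs_nonneg _) fun i _ => hb i
    _ = _ := by simp

lemma exists_good_basis {ι : Type*} [Fintype ι] [DecidableEq ι] (L : ℕ) (hL : 1 ≤ L)
    (S : Set (ι → ℤ)) (hS : ∀ v ∈ S, ∑ i, |v i| ≤ L) :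
    ∃ b : ι → (ι → ℤ), ∃ J : Set ι, (∀ i, ∑ j, |b i j| ≤ L) ∧ (∀ i ∈ J, b i ∈ S) ∧
      LinearIndependent ℚ (fun i j => (b i j : ℚ)) ∧
      ∀ v ∈ S, (fun j => (v j : ℚ)) ∈ Submodule.span ℚ ((fun i j => (b i j : ℚ)) '' J) := by
  let c : (ι → ℤ) → (ι → ℚ) := fun v j => (v j : ℚ)
  have hcinj : Function.Injective c := fun v w h => by
    ext j; have := congrFun h j; simpa [c] using this
  obtain ⟨B0, hB0, hspan, hli⟩ := exists_linearIndependent ℚ (c '' S)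
  let E : Set (ι → ℤ) := Set.range fun i => Pi.single i 1
  obtain ⟨B, hB, hBB, hE, hliB⟩ := exists_linearIndepOn_id_extension (t := c '' (S ∪ E)) hli
    (hB0.trans (Set.image_mono Set.subset_union_left))
  have htop : ⊤ ≤ Submodule.span ℚ (Set.range ((↑) : B → (ι → ℚ))) := by
    rw [Subtype.range_coe, ← (Pi.basisFun ℚ ι).span_eq, Submodule.span_le]
    rintro _ ⟨i, rfl⟩
    apply hE
    refine ⟨Pi.single i 1, Or.inr ⟨i, rfl⟩, ?_⟩
    ext j
    by_cases h : j = i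
    · subst h; simp [c]
    · simp [c, h]
  let bas : Module.Basis B ℚ (ι → ℚ) := Module.Basis.mk hliB htop
  let e : ι ≃ B := (Pi.basisFun ℚ ι).indexEquiv bas
  have hch : ∀ i, ∃ v ∈ S ∪ E, c v = (e i : ι → ℚ) := fun i => hB (e i).2
  choose b hbm hbc using hch
  have hceq : (fun i j => (b i j : ℚ)) = fun i => ((e i : B) : ι → ℚ) := by
    funext i; exact hbc i
  refine ⟨b, {i | (e i : ι → ℚ) ∈ B0}, ?_, ?_, ?_, ?_⟩
  · intro i
    rcases hbm i with h | ⟨k, hk⟩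
    · exact hS _ h
    · rw [← hk]
      have : ∀ j, |(Pi.single k 1 : ι → ℤ) j| = if j = k then 1 else 0 := by
        intro j; by_cases h : j = k
        · subst h; simp
        · simp [h]
      simp only [this]
      simpa using hL
  · intro i hi
    obtain ⟨v, hv, hv'⟩ := hB0 hi
    have : v = b i := hcinj (by rw [hv', hbc])
    exact this ▸ hv
  · rw [hceq]
    exact hliB.comp e e.injective
  · intro v hv
    have : c v ∈ Submodule.span ℚ B0 := hspan ▸ Submodule.subset_span ⟨v, hv, rfl⟩
    refine Submodule.span_mono ?_ this
    intro x hx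
    refine ⟨e.symm ⟨x, hBB hx⟩, by simpa using hx, ?_⟩
    rw [hceq]; simp

lemma lattice_bound {ι : Type*} [Fintype ι] [DecidableEq ι] (L : ℕ) (hL : 1 ≤ L)
    (S : Set (ι → ℤ)) (hS : ∀ v ∈ S, ∑ i, |v i| ≤ L) :
    ∃ N : AddSubgroup (ι → ℤ), N.index ≠ 0 ∧ N.index ≤ L ^ Fintype.card ι ∧
      ∀ v, ∀ k : ℕ, k ≠ 0 → k • v ∈ Submodule.span ℤ S → v ∈ N → v ∈ Submodule.span ℤ S := by
  obtain ⟨b, J, hb, hJ, hli, hsp⟩ := exists_good_basis L hL S hS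
  let c : (ι → ℤ) →ₗ[ℤ] (ι → ℚ) :=
    { toFun := fun v j => (v j : ℚ)
      map_add' := by intros; ext; simp
      map_smul' := by intros; ext; simp }
  have hliZ : LinearIndependent ℤ b := by
    apply LinearIndependent.of_comp c
    exact hli.restrict_scalars' ℤ
  let N := Submodule.span ℤ (Set.range b)
  let bN : Module.Basis ι ℤ N := Module.Basis.span hliZ
  have hidx : N.toAddSubgroup.index = (Matrix.of b).det.natAbs := by
    rw [AddSubgroup.index_eq_natAbs_det (Pi.basisFun ℤ ι) N.toAddSubgroup bN, 
      Module.Basis.det_apply, ← Matrix.det_transpose]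
    congr 2
    ext i j
    simp [bN, Module.Basis.toMatrix_apply]
    exact congrFun (congrArg Subtype.val (Module.Basis.span_apply hliZ i)) j
  have hdet : (Matrix.of b).det ≠ 0 := by
    have h := Matrix.linearIndependent_rows_iff_isUnit (A := (Matrix.of b).map (Int.cast : ℤ → ℚ))
    have h2 := h.1 hli
    rw [Matrix.isUnit_iff_isUnit_det] at h2
    intro h0
    have : ((Matrix.of b).map (Int.cast : ℤ → ℚ)).det = ((Matrix.of b).det : ℚ) := by
      simpa using ((Int.castRingHom ℚ).map_det (Matrix.of b)).symm
    rw [this, h0] at h2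
    simp at h2
  refine ⟨N.toAddSubgroup, by rw [hidx]; simpa using hdet, by rw [hidx]; exact det_le_l1 L _ hb, ?_⟩
  intro v k hk hkv hv
  obtain ⟨n, rfl⟩ := (Submodule.mem_span_range_iff_exists_fun ℤ).1 (show v ∈ N from hv)
  have h1 : c (k • ∑ i, n i • b i) ∈ Submodule.span ℚ ((fun i j => (b i j : ℚ)) '' J) := by
    have : Submodule.span ℤ S ≤ ((Submodule.span ℚ ((fun i j => (b i j : ℚ)) '' J)).restrictScalars ℤ).comap c := by
      rw [Submodule.span_le]
      intro v hv
      exact hsp v hv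
    exact this hkv
  obtain ⟨l, hlJ, hl⟩ := (Finsupp.mem_span_image_iff_linearCombination ℚ).1 h1
  have h2 : c (k • ∑ i, n i • b i) = Finsupp.linearCombination ℚ (fun i j => (b i j : ℚ))
      (Finsupp.equivFunOnFinite.symm fun i => (k * n i : ℚ)) := by
    rw [Finsupp.linearCombination_apply, Finsupp.sum_fintype _ _ (by simp)]
    ext j
    simp [c, Finset.mul_sum, mul_assoc]
  rw [h2] at hl
  have h3 := hli hl
  refine Submodule.sum_mem _ fun i _ => ?_
  by_cases hi : i ∈ J
  · exact Submodule.smul_mem _ _ (Submodule.subset_span (hJ i hi))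
  · have : l i = 0 := by
      by_contra h
      exact hi (hlJ (by simpa using h))
    rw [h3] at this
    have : n i = 0 := by simpa [hk] using this
    simp [this]
open MonoidAlgebra in
/-- `Φ` is the Fox crossed homomorphism relative to `p`. -/
structure IsFox {X Q : Type*} [DecidableEq X] [Group Q] (p : FreeGroup X →* Q)
    (Φ : FreeGroup X → X → MonoidAlgebra ℤ Q) : Prop where
  mul : ∀ a b, Φ (a * b) = Φ a + MonoidAlgebra.single (p a) (1 : ℤ) • Φ b
  of : ∀ x, Φ (FreeGroup.of x) = Pi.single x 1

lemma exists_fox {X Q : Type*} [DecidableEq X] [Group Q] (p : FreeGroup X →* Q) :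
    ∃ Φ, IsFox p Φ := by
  let V := X → MonoidAlgebra ℤ Q
  let u : Q →* (MonoidAlgebra ℤ Q)ˣ := (MonoidAlgebra.of ℤ Q).toHomUnits
  let act : Q →* MulAut (Multiplicative V) :=
    { toFun := fun q => AddEquiv.toMultiplicative (DistribMulAction.toAddEquiv V (u q))
      map_one' := by
        ext v : 1
        show Multiplicative.ofAdd (u 1 • v.toAdd) = v
        rw [map_one, one_smul]; rfl
      map_mul' := by
        intro a b
        ext v : 1
        show Multiplicative.ofAdd (u (a * b) • v.toAdd) = Multiplicative.ofAdd (u a • u b • v.toAdd)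
        rw [map_mul, mul_smul] }
  let f : FreeGroup X →* Multiplicative V ⋊[act] Q :=
    FreeGroup.lift fun x => ⟨Multiplicative.ofAdd (Pi.single x 1), p (FreeGroup.of x)⟩
  have hf : ∀ a, (f a).right = p a := by
    intro a
    have : (SemidirectProduct.rightHom.comp f) = p := by
      ext x; simp [f]
    exact DFunLike.congr_fun this a
  refine ⟨fun a => (f a).left.toAdd, ?_, ?_⟩
  · intro a b
    rw [map_mul, SemidirectProduct.mul_left, hf, toAdd_mul]
    rfl
  · intro x
    simp [f]

namespace IsFox
variable {X Q : Type*} [DecidableEq X] [Group Q] {p : FreeGroup X →* Q}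
  {Φ : FreeGroup X → X → MonoidAlgebra ℤ Q}

lemma one (h : IsFox p Φ) : Φ 1 = 0 := by
  have := h.mul 1 1
  rw [map_one, mul_one, ← MonoidAlgebra.one_def, one_smul] at this
  simpa using this

lemma inv (h : IsFox p Φ) (a : FreeGroup X) :
    Φ a⁻¹ = - (MonoidAlgebra.single (p a⁻¹) (1 : ℤ) • Φ a) := by
  have := h.mul a⁻¹ a
  rw [inv_mul_cancel, h.one] at this
  exact eq_neg_of_add_eq_zero_left this.symm

lemma mul_ker (h : IsFox p Φ) {a : FreeGroup X} (ha : p a = 1) (b : FreeGroup X) :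
    Φ (a * b) = Φ a + Φ b := by
  rw [h.mul, ha, ← MonoidAlgebra.one_def, one_smul]

lemma inv_ker (h : IsFox p Φ) {a : FreeGroup X} (ha : p a = 1) :
    Φ a⁻¹ = - Φ a := by
  rw [h.inv, map_inv, ha, inv_one, ← MonoidAlgebra.one_def, one_smul]

lemma pow_ker (h : IsFox p Φ) {a : FreeGroup X} (ha : p a = 1) (n : ℕ) :
    Φ (a ^ n) = n • Φ a := by
  induction n with
  | zero => simp [h.one]
  | succ n ih => rw [pow_succ', h.mul_ker ha, ih, succ_nsmul']

lemma conj_ker (h : IsFox p Φ) {a : FreeGroup X} (ha : p a = 1) (g : FreeGroup X) :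
    Φ (g * a * g⁻¹) = MonoidAlgebra.single (p g) (1 : ℤ) • Φ a := by
  rw [h.mul, h.mul, h.inv, map_mul, ha, mul_one, smul_neg, smul_smul, MonoidAlgebra.single_mul_single]
  simp [← MonoidAlgebra.one_def]

lemma commutator_ker (h : IsFox p Φ) {a : FreeGroup X} (ha : a ∈ ⁅p.ker, p.ker⁆) : Φ a = 0 := by
  have key : ⁅p.ker, p.ker⁆ ≤
      ({ carrier := {a | p a = 1 ∧ Φ a = 0}
         one_mem' := ⟨map_one p, h.one⟩
         mul_mem' := by
          rintro a b ⟨ha, ha'⟩ ⟨hb, hb'⟩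
          exact ⟨by simp [ha, hb], by rw [h.mul_ker ha, ha', hb', add_zero]⟩
         inv_mem' := by
          rintro a ⟨ha, ha'⟩
          exact ⟨by simp [ha], by rw [h.inv_ker ha, ha', neg_zero]⟩ } : Subgroup (FreeGroup X)) := by
    rw [Subgroup.commutator_le]
    intro a ha b hb
    rw [MonoidHom.mem_ker] at ha hb
    refine ⟨by simp [commutatorElement_def, ha, hb], ?_⟩
    rw [commutatorElement_def, h.mul_ker (by simp [ha, hb]), h.mul_ker (by simp [ha, hb]), h.mul_ker ha,
      h.inv_ker ha, h.inv_ker hb]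
    abel
  exact (key ha).2

lemma mem_commutator [Fintype X] (h : IsFox p Φ) (hp : Function.Surjective p) {w : FreeGroup X}
    (hw : p w = 1) (h0 : Φ w = 0) : w ∈ ⁅p.ker, p.ker⁆ := by
  classical
  let t := Function.surjInv hp
  have ht : ∀ q, p (t q) = q := Function.surjInv_eq hp
  let B := Additive (Abelianization p.ker)
  let br : Q → FreeGroup X → B := fun q w => Additive.ofMul (Abelianization.of
    (⟨t q * w * (t (q * p w))⁻¹, by simp [MonoidHom.mem_ker, ht]⟩ : p.ker))
  have br_mul : ∀ q a b, br q (a * b) = br q a + br (q * p a) b := by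
    intro q a b
    simp only [br]
    rw [← ofMul_mul, ← MonoidHom.map_mul (Abelianization.of (G := p.ker))]
    congr 2
    ext
    simp [mul_assoc]
  have br_one : ∀ q, br q 1 = 0 := by
    intro q
    have := br_mul q 1 1
    simpa using this
  let ψ : X → MonoidAlgebra ℤ Q →+ B := fun x =>
    (Finsupp.liftAddHom fun q => (zmultiplesHom B) (br q (FreeGroup.of x))).comp
      MonoidAlgebra.coeffAddEquiv.toAddMonoidHom
  let Ψ : (X → MonoidAlgebra ℤ Q) →+ B := ∑ x, (ψ x).comp (Pi.evalAddMonoidHom _ x)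
  have key : ∀ w q, Ψ (MonoidAlgebra.single q (1 : ℤ) • Φ w) = br q w := by
    intro w
    induction w using FreeGroup.induction_on with
    | C1 => intro q; rw [h.one, smul_zero, map_zero, br_one]
    | of x =>
      intro q
      rw [h.of]
      simp only [Ψ, AddMonoidHom.finsetSum_apply, AddMonoidHom.comp_apply, Pi.evalAddMonoidHom_apply,
        Pi.smul_apply]
      rw [Finset.sum_eq_single x]
      · simp [ψ]
      · intro y _ hy
        simp [hy]
      · simp
    | inv_of x ih =>
      intro q
      have := br_mul q (FreeGroup.of x)⁻¹ (FreeGroup.of x)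
      rw [inv_mul_cancel, br_one] at this
      rw [eq_neg_of_add_eq_zero_left this.symm, h.inv, smul_neg, map_neg, smul_smul,
        MonoidAlgebra.single_mul_single, mul_one, ih]
    | mul a b iha ihb =>
      intro q
      rw [h.mul, smul_add, map_add, smul_smul, MonoidAlgebra.single_mul_single, mul_one, iha, ihb, br_mul]
  have h1 := key w 1
  rw [h0, smul_zero, map_zero] at h1
  have h2 : Abelianization.of (⟨t 1 * w * (t (1 * p w))⁻¹, by simp [MonoidHom.mem_ker, ht]⟩ : p.ker) = 1 :=
    h1.symm
  have h3 : Abelianization.of (⟨w, hw⟩ : p.ker) = 1 := by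
    have e : (⟨t 1 * w * (t (1 * p w))⁻¹, by simp [MonoidHom.mem_ker, ht]⟩ : p.ker) =
      ⟨t 1, ht 1⟩ * ⟨w, hw⟩ * ⟨t 1, ht 1⟩⁻¹ := by
      ext; simp [hw]
    rw [e, map_mul, map_mul, map_inv, mul_comm, inv_mul_cancel_left] at h2
    exact h2
  have h4 : (⟨w, hw⟩ : p.ker) ∈ commutator p.ker := by
    rw [← Abelianization.ker_of]; exact h3
  rw [← Subgroup.map_subtype_commutator]
  exact ⟨_, h4, rfl⟩

/-- Image of a normal subgroup contained in the kernel. -/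
def image (h : IsFox p Φ) (hp : Function.Surjective p) (S : Subgroup (FreeGroup X)) (hS : S.Normal)
    (hle : S ≤ p.ker) : Submodule (MonoidAlgebra ℤ Q) (X → MonoidAlgebra ℤ Q) where
  carrier := Φ '' S
  zero_mem' := ⟨1, S.one_mem, h.one⟩
  add_mem' := by
    rintro _ _ ⟨a, ha, rfl⟩ ⟨b, hb, rfl⟩
    exact ⟨a * b, S.mul_mem ha hb, h.mul_ker (hle ha) b⟩
  smul_mem' := by
    rintro c _ ⟨a, ha, rfl⟩
    induction c using MonoidAlgebra.induction_linear with
    | zero => exact ⟨1, S.one_mem, by rw [zero_smul, h.one]⟩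
    | add x y hx hy =>
      obtain ⟨u, hu, hu'⟩ := hx
      obtain ⟨v, hv, hv'⟩ := hy
      exact ⟨u * v, S.mul_mem hu hv, by rw [h.mul_ker (hle hu), hu', hv', add_smul]⟩
    | single q n =>
      obtain ⟨g, rfl⟩ := hp q
      have hz : ∃ b ∈ S, Φ b = n • Φ a := by
        obtain ⟨m, rfl | rfl⟩ := n.eq_nat_or_neg
        · exact ⟨a ^ m, S.pow_mem ha m, by rw [h.pow_ker (hle ha)]; simp⟩
        · exact ⟨(a ^ m)⁻¹, S.inv_mem (S.pow_mem ha m), by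
            rw [h.inv_ker (hle (S.pow_mem ha m)), h.pow_ker (hle ha)]; simp⟩
      obtain ⟨b, hb, hb'⟩ := hz
      refine ⟨g * b * g⁻¹, hS.conj_mem b hb g, ?_⟩
      rw [h.conj_ker (hle hb), hb', ← Int.cast_smul_eq_zsmul (MonoidAlgebra ℤ Q), smul_smul]
      congr 1
      rw [MonoidAlgebra.intCast_def, MonoidAlgebra.single_mul_single, mul_one, one_mul]
      simp
end IsFox

lemma IsFox.mem_image {X Q : Type*} [DecidableEq X] [Group Q] {p : FreeGroup X →* Q}
    {Φ : FreeGroup X → X → MonoidAlgebra ℤ Q} (h : IsFox p Φ) (hp : Function.Surjective p)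
    (S : Subgroup (FreeGroup X)) (hS : S.Normal)
    (hle : S ≤ p.ker) (v) : v ∈ h.image hp S hS hle ↔ ∃ a ∈ S, Φ a = v := Iff.rfl

lemma exists_fin_ab {A : Type*} [CommGroup A] [Group.FG A] (S : Subgroup A) :
    ∃ T : Set A, T.Finite ∧ Subgroup.closure T = S := by
  have : Module.Finite ℤ (Additive A) := Module.Finite.iff_addGroup_fg.2 inferInstance
  have h1 : (AddSubgroup.toIntSubmodule (Subgroup.toAddSubgroup S)).FG := IsNoetherian.noetherian _
  have h2 : (Subgroup.toAddSubgroup S).FG := by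
    rw [← AddSubgroup.toIntSubmodule_toAddSubgroup (Subgroup.toAddSubgroup S)]
    exact (Submodule.fg_iff_addSubgroup_fg _).1 h1
  have h3 : S.FG := (Subgroup.fg_iff_add_fg S).2 h2
  obtain ⟨T, hT⟩ := h3
  exact ⟨T, T.finite_toSet, hT⟩

lemma exists_fin_rel {X : Type*} [Finite X] (K : Subgroup (FreeGroup X)) [hKn : K.Normal] :
    ∃ R : Set (FreeGroup X), R.Finite ∧ R ⊆ K ∧
      K ≤ Subgroup.normalClosure R ⊔ ⁅commutator (FreeGroup X), commutator (FreeGroup X)⁆ := by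
  classical
  letI := Fintype.ofFinite X
  let p : FreeGroup X →* Abelianization (FreeGroup X) := Abelianization.of
  have hp : Function.Surjective p := QuotientGroup.mk_surjective
  have hker : p.ker = commutator (FreeGroup X) := Abelianization.ker_of _
  have : Group.FG (Abelianization (FreeGroup X)) := Group.fg_of_surjective hp
  obtain ⟨Φ, h⟩ := exists_fox p
  have : IsNoetherianRing (MonoidAlgebra ℤ (Abelianization (FreeGroup X))) :=
    Algebra.FiniteType.isNoetherianRing ℤ _
  have hfg : (h.image hp (K ⊓ p.ker) inferInstance inf_le_right).FG := IsNoetherian.noetherian _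
  obtain ⟨T, hT⟩ := hfg
  have hTm : ∀ v : T, ∃ a ∈ K ⊓ p.ker, Φ a = v := fun v => by
    have : v.1 ∈ h.image hp (K ⊓ p.ker) inferInstance inf_le_right := by
      rw [← hT]; exact Submodule.subset_span v.2
    exact this
  choose r hr hrv using hTm
  obtain ⟨T2, hT2f, hT2⟩ := exists_fin_ab (K.map p)
  have hT2m : ∀ v : T2, ∃ a ∈ K, p a = v := fun v => by
    have : (v : Abelianization (FreeGroup X)) ∈ K.map p := by
      rw [← hT2]; exact Subgroup.subset_closure v.2
    exact this
  choose s hs hsv using hT2m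
  have : Finite T2 := hT2f
  refine ⟨Set.range r ∪ Set.range s, (Set.finite_range r).union (Set.finite_range s), ?_, ?_⟩
  · rintro _ (⟨v, rfl⟩ | ⟨v, rfl⟩)
    · exact (hr v).1
    · exact hs v
  · set R := Set.range r ∪ Set.range s with hR
    have hRK : Subgroup.normalClosure R ≤ K := by
      apply Subgroup.normalClosure_le_normal
      rintro _ (⟨v, rfl⟩ | ⟨v, rfl⟩)
      · exact (hr v).1
      · exact hs v
    -- step one
    have step1 : ∀ w ∈ K, p w = 1 → 
        w ∈ Subgroup.normalClosure R ⊔ ⁅commutator (FreeGroup X), commutator (FreeGroup X)⁆ := by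
      intro w hw hpw
      have h1 : Φ w ∈ h.image hp (Subgroup.normalClosure R ⊓ p.ker) inferInstance inf_le_right := by
        have h2 : h.image hp (K ⊓ p.ker) inferInstance inf_le_right ≤
            h.image hp (Subgroup.normalClosure R ⊓ p.ker) inferInstance inf_le_right := by
          rw [← hT, Submodule.span_le]
          intro v hv
          exact ⟨r ⟨v, hv⟩, ⟨Subgroup.subset_normalClosure (Or.inl ⟨_, rfl⟩), (hr ⟨v, hv⟩).2⟩,
            hrv ⟨v, hv⟩⟩
        exact h2 ⟨w, ⟨hw, hpw⟩, rfl⟩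
      obtain ⟨u, ⟨hu, hup⟩, huw⟩ := h1
      have hup' : p u = 1 := hup
      have h3 : w * u⁻¹ ∈ ⁅p.ker, p.ker⁆ := by
        apply h.mem_commutator hp
        · simp [hpw, hup']
        · rw [h.mul_ker hpw, h.inv_ker hup', huw, add_neg_cancel]
      rw [hker] at h3
      have : w = (w * u⁻¹) * u := by group
      rw [this]
      exact mul_mem (Subgroup.mem_sup_right h3) (Subgroup.mem_sup_left hu)
    intro k hk
    have h4 : K.map p ≤ (Subgroup.normalClosure R).map p := by
      rw [← hT2, Subgroup.closure_le]
      intro v hv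
      exact ⟨s ⟨v, hv⟩, Subgroup.subset_normalClosure (Or.inr ⟨_, rfl⟩), hsv ⟨v, hv⟩⟩
    obtain ⟨c, hc, hck⟩ := h4 ⟨k, hk, rfl⟩
    have h5 := step1 (k * c⁻¹) (mul_mem hk (inv_mem (hRK hc))) (by simp [hck])
    have : k = (k * c⁻¹) * c := by group
    rw [this]
    exact mul_mem h5 (Subgroup.mem_sup_left hc)

/-- The sum of absolute values of all coefficients. -/
def l1 {X Q : Type*} [Fintype X] [Fintype Q] (v : X → MonoidAlgebra ℤ Q) : ℤ :=
  ∑ x, ∑ q, |(v x).coeff q|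

lemma l1_add {X Q : Type*} [Fintype X] [Fintype Q] (v w : X → MonoidAlgebra ℤ Q) :
    l1 (v + w) ≤ l1 v + l1 w := by
  simp only [l1, ← Finset.sum_add_distrib]
  gcongr with x _ q _
  exact abs_add_le _ _

lemma l1_neg {X Q : Type*} [Fintype X] [Fintype Q] (v : X → MonoidAlgebra ℤ Q) :
    l1 (-v) = l1 v := by
  simp [l1]

lemma l1_smul {X Q : Type*} [Fintype X] [Fintype Q] [Group Q] (g : Q) (v : X → MonoidAlgebra ℤ Q) :
    l1 (MonoidAlgebra.single g (1 : ℤ) • v) = l1 v := by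
  simp only [l1]
  refine Finset.sum_congr rfl fun x _ => ?_
  refine (Fintype.sum_equiv (Equiv.mulLeft g) _ _ fun q => ?_).symm
  simp

lemma l1_fox.{u, v} {X : Type v} [Fintype X] [DecidableEq X] (w : FreeGroup X) :
    ∃ L : ℕ, ∀ (Q : Type u) [Group Q] [Fintype Q] (p : FreeGroup X →* Q)
      (Φ : FreeGroup X → X → MonoidAlgebra ℤ Q), IsFox p Φ → l1 (Φ w) ≤ L := by
  induction w using FreeGroup.induction_on with
  | C1 => 
    refine ⟨0, fun Q _ _ p Φ h => ?_⟩
    rw [h.one]; simp [l1]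
  | of x =>
    refine ⟨1, fun Q _ _ p Φ h => ?_⟩
    classical
    rw [h.of, l1, Finset.sum_eq_single x]
    · rw [Finset.sum_eq_single 1]
      · simp [MonoidAlgebra.one_def]
      · intro q _ hq; simp [MonoidAlgebra.one_def, hq.symm]
      · simp
    · intro y _ hy; simp [hy]
    · simp
  | inv_of x ih =>
    obtain ⟨L, hL⟩ := ih
    refine ⟨L, fun Q _ _ p Φ h => ?_⟩
    rw [h.inv, l1_neg, l1_smul]
    exact hL Q p Φ h
  | mul a b iha ihb =>
    obtain ⟨L, hL⟩ := iha
    obtain ⟨M, hM⟩ := ihb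
    refine ⟨L + M, fun Q _ _ p Φ h => ?_⟩
    rw [h.mul]
    refine (l1_add _ _).trans ?_
    rw [l1_smul]
    push_cast
    exact add_le_add (hL Q p Φ h) (hM Q p Φ h)

lemma span_single_top (Q : Type*) [Group Q] :
    Submodule.span ℤ (Set.range fun q : Q => MonoidAlgebra.single q (1 : ℤ)) = ⊤ := by
  rw [eq_top_iff]
  rintro c -
  induction c using MonoidAlgebra.induction_linear with
  | zero => exact zero_mem _
  | add x y hx hy => exact add_mem hx hy
  | single q n =>
    have : MonoidAlgebra.single q n = n • MonoidAlgebra.single q (1 : ℤ) := by simp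
    rw [this]
    exact Submodule.smul_mem _ _ (Submodule.subset_span ⟨q, rfl⟩)

open Pointwise in
theorem stmt_9 (G : Type*) [Group G] [Group.FG G] (hG : IsMetabelian G) :
    ∃ C : ℕ, ∀ H : Subgroup G, ⁅(⊤ : Subgroup G), (⊤ : Subgroup G)⁆ ≤ H → H.index ≠ 0 →
      Nat.card (CommGroup.torsion (Abelianization H)) ≤ C ^ H.index := by
  classical
  obtain ⟨X, hX, π, hπ⟩ := Group.fg_iff_exists_freeGroup_hom_surjective_finite.1 ‹Group.FG G›
  letI := Fintype.ofFinite X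
  obtain ⟨R, hRf, hRK, hKR⟩ := exists_fin_rel π.ker
  have hL : ∃ L : ℕ, 1 ≤ L ∧ ∀ r ∈ R, ∀ (Q : Type _) [Group Q] [Fintype Q] (p : FreeGroup X →* Q)
      (Φ : FreeGroup X → X → MonoidAlgebra ℤ Q), IsFox p Φ → l1 (Φ r) ≤ L := by
    choose l hl using l1_fox (X := X)
    obtain ⟨L, hL⟩ := (hRf.image l).bddAbove
    refine ⟨L + 1, by omega, fun r hr Q _ _ p Φ h => (hl r Q p Φ h).trans ?_⟩
    have := hL ⟨r, hr, rfl⟩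
    exact_mod_cast this.trans (Nat.le_succ L)
  obtain ⟨L, hL1, hL⟩ := hL
  refine ⟨L ^ Fintype.card X, fun H hH hidx => ?_⟩
  have hHn : H.Normal := ⟨fun h hh g => by
    have h1 : g * h * g⁻¹ * h⁻¹ ∈ H :=
      hH (Subgroup.commutator_mem_commutator (Subgroup.mem_top g) (Subgroup.mem_top h))
    have h2 := mul_mem h1 hh
    rwa [inv_mul_cancel_right] at h2⟩
  have : H.FiniteIndex := ⟨hidx⟩
  letI : Fintype (G ⧸ H) := Fintype.ofFinite _
  let p : FreeGroup X →* G ⧸ H := (QuotientGroup.mk' H).comp π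
  have hp : Function.Surjective p := (QuotientGroup.mk'_surjective H).comp hπ
  have hpk : ∀ w, p w = 1 ↔ π w ∈ H := fun w => QuotientGroup.eq_one_iff (π w)
  have hker : p.ker = H.comap π := by ext w; exact hpk w
  have hmap : ⁅H, H⁆ = (⁅p.ker, p.ker⁆).map π := by
    rw [Subgroup.map_commutator, hker, Subgroup.map_comap_eq_self_of_surjective hπ]
  have hkle : π.ker ≤ p.ker := by
    intro w hw
    rw [MonoidHom.mem_ker] at hw
    rw [hker, Subgroup.mem_comap, hw]
    exact one_mem H
  have hcle : commutator (FreeGroup X) ≤ p.ker := by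
    rw [commutator_def, hker, ← Subgroup.map_le_iff_le_comap, Subgroup.map_commutator]
    exact (Subgroup.commutator_mono le_top le_top).trans hH
  obtain ⟨Φ, h⟩ := exists_fox p
  let e : (X → MonoidAlgebra ℤ (G ⧸ H)) →ₗ[ℤ] (X × (G ⧸ H) → ℤ) :=
    { toFun := fun v i => (v i.1).coeff i.2
      map_add' := by intros; rfl
      map_smul' := by intros; rfl }
  have he : Function.Injective e := by
    intro v w hvw
    ext x q
    exact congrFun hvw (x, q)
  let S0 : Set (X → MonoidAlgebra ℤ (G ⧸ H)) :=
    (Set.range fun q : G ⧸ H => MonoidAlgebra.single q (1 : ℤ)) • (Φ '' R)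
  have hS0 : Submodule.span ℤ S0 =
      (Submodule.span (MonoidAlgebra ℤ (G ⧸ H)) (Φ '' R)).restrictScalars ℤ :=
    Submodule.span_smul_of_span_eq_top (span_single_top _) _
  have hNeq : Submodule.span (MonoidAlgebra ℤ (G ⧸ H)) (Φ '' R) =
      h.image hp π.ker inferInstance hkle := by
    apply le_antisymm
    · rw [Submodule.span_le]
      rintro _ ⟨r, hr, rfl⟩
      exact ⟨r, hRK hr, rfl⟩
    · let T : Subgroup (FreeGroup X) :=
        { carrier := {a | p a = 1 ∧ Φ a ∈ Submodule.span (MonoidAlgebra ℤ (G ⧸ H)) (Φ '' R)}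
          one_mem' := ⟨map_one p, by rw [h.one]; exact zero_mem _⟩
          mul_mem' := by
            rintro a b ⟨ha, ha'⟩ ⟨hb, hb'⟩
            exact ⟨by simp [ha, hb], by rw [h.mul_ker ha]; exact add_mem ha' hb'⟩
          inv_mem' := by
            rintro a ⟨ha, ha'⟩
            exact ⟨by simp [ha], by rw [h.inv_ker ha]; exact neg_mem ha'⟩ }
      have : T.Normal := ⟨by
        rintro a ⟨ha, ha'⟩ g
        exact ⟨by simp [ha], by rw [h.conj_ker ha]; exact Submodule.smul_mem _ _ ha'⟩⟩
      have hT : π.ker ≤ T := by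
        refine hKR.trans (sup_le (Subgroup.normalClosure_le_normal ?_) ?_)
        · intro r hr
          exact ⟨hkle (hRK hr), Submodule.subset_span ⟨r, hr, rfl⟩⟩
        · intro a ha
          have ha2 := Subgroup.commutator_mono hcle hcle ha
          exact ⟨(Subgroup.commutator_le_right _ _ ha2 : a ∈ p.ker), by
            rw [h.commutator_ker ha2]; exact zero_mem _⟩
      rintro _ ⟨a, ha, rfl⟩
      exact (hT ha).2
  have hspan : ∀ v, e v ∈ Submodule.span ℤ (e '' S0) ↔ ∃ a, π a = 1 ∧ Φ a = v := by
    intro v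
    rw [Submodule.span_image, hS0, hNeq, Submodule.mem_map]
    constructor
    · rintro ⟨y, ⟨a, ha, rfl⟩, hy⟩
      exact ⟨a, ha, he hy⟩
    · rintro ⟨a, ha, rfl⟩
      exact ⟨_, ⟨a, ha, rfl⟩, rfl⟩
  obtain ⟨N, hN0, hNle, hN⟩ := lattice_bound L hL1 (e '' S0) (by
    rintro _ ⟨_, ⟨_, ⟨q, rfl⟩, _, ⟨r, hr, rfl⟩, rfl⟩, rfl⟩
    have h1 := hL r hr (G ⧸ H) p Φ h
    rw [← l1_smul q, l1, ← Fintype.sum_prod_type'] at h1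
    exact h1)
  have : N.FiniteIndex := ⟨hN0⟩
  have hlift : ∀ x : CommGroup.torsion (Abelianization H), ∃ w : FreeGroup X, ∃ hw : π w ∈ H,
      Abelianization.of (⟨π w, hw⟩ : H) = x := by
    intro x
    obtain ⟨y, hy⟩ := QuotientGroup.mk_surjective (x : Abelianization H)
    obtain ⟨w, hw⟩ := hπ y
    refine ⟨w, hw ▸ y.2, ?_⟩
    have hy' : (⟨π w, hw ▸ y.2⟩ : H) = y := Subtype.ext hw
    rw [hy', ← hy]
    rfl
  choose w hw hwx using hlift
  -- the criterion: triviality in the abelianization in terms of `Φ`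
  have crit : ∀ (a : FreeGroup X) (ha : π a ∈ H),
      Abelianization.of (⟨π a, ha⟩ : H) = 1 ↔ e (Φ a) ∈ Submodule.span ℤ (e '' S0) := by
    intro a ha
    have hab : Abelianization.of (⟨π a, ha⟩ : H) = 1 ↔ π a ∈ ⁅H, H⁆ := by
      rw [← MonoidHom.mem_ker, Abelianization.ker_of, ← Subgroup.map_subtype_commutator]
      constructor
      · intro h; exact ⟨_, h, rfl⟩
      · rintro ⟨y, hy, hya⟩
        have : y = ⟨π a, ha⟩ := Subtype.ext hya
        exact this ▸ hy
    rw [hab, hspan, hmap]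
    constructor
    · rintro ⟨c, hc, hca⟩
      refine ⟨c⁻¹ * a, by simp [hca], ?_⟩
      have hc1 : p c = 1 := Subgroup.commutator_le_right _ _ hc
      rw [h.mul_ker (by simp [hc1]), h.inv_ker hc1, h.commutator_ker hc, neg_zero, zero_add]
    · rintro ⟨u, hu, hua⟩
      have hpa := (hpk a).2 ha
      have hpu : p u = 1 := hkle hu
      refine ⟨a * u⁻¹, ?_, by simp [hu]⟩
      apply h.mem_commutator hp
      · simp [hpa, hpu]
      · rw [h.mul_ker hpa, h.inv_ker hpu, hua, add_neg_cancel]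
  have htors : ∀ x, ∃ k : ℕ, k ≠ 0 ∧ k • e (Φ (w x)) ∈ Submodule.span ℤ (e '' S0) := by
    intro x
    obtain ⟨k, hk, hxk⟩ := isOfFinOrder_iff_pow_eq_one.1 x.2
    refine ⟨k, hk.ne', ?_⟩
    rw [← map_nsmul, ← h.pow_ker ((hpk _).2 (hw x))]
    have hm : π (w x ^ k) ∈ H := by rw [map_pow]; exact pow_mem (hw x) k
    rw [← crit _ hm, ← hxk, ← hwx x, ← map_pow]
    congr 1
    ext; simp
  let F : CommGroup.torsion (Abelianization H) → (X × (G ⧸ H) → ℤ) ⧸ N :=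
    fun x => QuotientAddGroup.mk (e (Φ (w x)))
  have hF : Function.Injective F := by
    intro x y hxy
    have h1 : - e (Φ (w x)) + e (Φ (w y)) ∈ N := QuotientAddGroup.eq.1 hxy
    have hpx := (hpk _).2 (hw x)
    have hm : π ((w x)⁻¹ * w y) ∈ H := by
      rw [map_mul, map_inv]; exact mul_mem (inv_mem (hw x)) (hw y)
    have h2 : - e (Φ (w x)) + e (Φ (w y)) = e (Φ ((w x)⁻¹ * w y)) := by
      rw [h.mul_ker (by simp [hpx]), h.inv_ker hpx, map_add, map_neg]
    obtain ⟨k, hk, hk'⟩ := htors x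
    obtain ⟨l, hl, hl'⟩ := htors y
    have h3 := hN _ (k * l) (mul_ne_zero hk hl) (by
      rw [smul_add, smul_neg]
      refine add_mem (neg_mem ?_) ?_
      · rw [mul_comm, mul_smul]; exact Submodule.smul_of_tower_mem _ l hk'
      · rw [mul_smul]; exact Submodule.smul_of_tower_mem _ k hl') h1
    rw [h2, ← crit _ hm] at h3
    have h4 : (⟨π ((w x)⁻¹ * w y), hm⟩ : H) = (⟨π (w x), hw x⟩)⁻¹ * ⟨π (w y), hw y⟩ := by
      ext; simp
    rw [h4, map_mul, map_inv, hwx, hwx] at h3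
    exact Subtype.ext (inv_mul_eq_one.1 h3)
  calc Nat.card (CommGroup.torsion (Abelianization H))
      ≤ Nat.card ((X × (G ⧸ H) → ℤ) ⧸ N) := Nat.card_le_card_of_injective F hF
    _ = N.index := rfl
    _ ≤ L ^ Fintype.card (X × (G ⧸ H)) := hNle
    _ = (L ^ Fintype.card X) ^ H.index := by
      rw [Fintype.card_prod, pow_mul, Subgroup.index, Nat.card_eq_fintype_card]
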